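/- arXiv:2012.12692 — 3 statements merged into one kernel-verified Lean document; each statement's English description precedes it below -/
import Mathlib

section
/- For every natural number n, the improper integral ∫_{0}^{∞} (x−1)^n e^{−x} dx (over the reals) equals !n, the number of derangements of an n-element set. -/
/-!
Write `I n` for the integral. Integrating the derivative of `-(x - 1) ^ (n + 1) * exp (-x)` over
`(0, ∞)` gives `I (n + 1) - (n + 1) * I n = (-1) ^ (n + 1)`, the recurrence `numDerangements_succ`
satisfied by the subfactorials, and `I 0 = 1 = !0`.
-/

lemma tendsto_sub_one_pow_mul_exp_neg (n : ℕ) :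
    Filter.Tendsto (fun x : ℝ => (x - 1) ^ n * Real.exp (-x)) Filter.atTop (nhds 0) := by
  have h := ((Real.tendsto_pow_mul_exp_neg_atTop_nhds_zero n).comp
    (Filter.tendsto_atTop_add_const_right Filter.atTop (-1 : ℝ) Filter.tendsto_id)).mul_const
    (Real.exp (-1))
  rw [zero_mul] at h
  refine h.congr fun x => ?_
  simp only [Function.comp_apply, id, mul_assoc, ← Real.exp_add]
  ring_nf

lemma integrableOn_sub_one_pow_mul_exp_neg (n : ℕ) :
    MeasureTheory.IntegrableOn (fun x : ℝ => (x - 1) ^ n * Real.exp (-x)) (Set.Ioi 0) := by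
  refine integrable_of_isBigO_exp_neg (b := 1 / 2) (by norm_num) (by fun_prop) ?_
  have hpow : (fun x : ℝ => (x - 1) ^ n) =O[Filter.atTop] fun x : ℝ => x ^ n := by
    refine Asymptotics.IsBigO.of_bound 1 ?_
    filter_upwards [Filter.eventually_ge_atTop 1] with x hx
    rw [one_mul, norm_pow, norm_pow, Real.norm_of_nonneg (by linarith),
      Real.norm_of_nonneg (by linarith)]
    exact pow_le_pow_left₀ (by linarith) (by linarith) n
  have hexp := hpow.trans
    (isLittleO_pow_exp_pos_mul_atTop n (by norm_num : (0 : ℝ) < 1 / 2)).isBigO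
  refine (hexp.mul (Asymptotics.isBigO_refl (fun x : ℝ => Real.exp (-x)) _)).congr_right
    fun x => ?_
  rw [← Real.exp_add]
  ring_nf

lemma integral_sub_one_pow_succ_mul_exp_neg (n : ℕ) :
    ∫ x in Set.Ioi (0 : ℝ), (x - 1) ^ (n + 1) * Real.exp (-x) =
      (n + 1) * (∫ x in Set.Ioi (0 : ℝ), (x - 1) ^ n * Real.exp (-x)) - (-1) ^ n := by
  have hint := (integrableOn_sub_one_pow_mul_exp_neg (n + 1)).sub
    ((integrableOn_sub_one_pow_mul_exp_neg n).const_mul ((n : ℝ) + 1))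
  have hftc := MeasureTheory.integral_Ioi_of_hasDerivAt_of_tendsto'
    (f := fun x : ℝ => -((x - 1) ^ (n + 1) * Real.exp (-x))) (a := 0) (m := 0)
    (fun x _ => ?_) hint (by simpa using (tendsto_sub_one_pow_mul_exp_neg (n + 1)).neg)
  · simp only [Pi.sub_apply] at hftc
    rw [MeasureTheory.integral_sub (integrableOn_sub_one_pow_mul_exp_neg (n + 1))
      ((integrableOn_sub_one_pow_mul_exp_neg n).const_mul _),
      MeasureTheory.integral_const_mul] at hftc
    simp only [zero_sub, neg_zero, Real.exp_zero, mul_one, neg_neg, pow_succ (-1 : ℝ) n] at hftc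
    linarith
  · have h := ((((hasDerivAt_id x).sub_const 1).pow (n + 1)).mul
      (hasDerivAt_id x).neg.exp).neg
    refine h.congr_deriv ?_
    simp only [Pi.sub_apply, id, Nat.cast_add, Nat.cast_one, Nat.add_sub_cancel, Pi.pow_apply,
      Pi.neg_apply]
    ring

theorem derangements_integral (n : ℕ) :
    ∫ x in Set.Ioi (0 : ℝ), (x - 1) ^ n * Real.exp (-x) = (numDerangements n : ℝ) := by
  induction n with
  | zero => simp [integral_exp_Iic_zero]
  | succ n ih =>
    rw [integral_sub_one_pow_succ_mul_exp_neg, ih]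
    exact_mod_cast (numDerangements_succ n).symm
end

section
/- Define sequences of natural numbers by p₀ = 2, p₁ = 6, p_k = (k+1)·(p_{k−1} + p_{k−2}) for k ≥ 2, and q₀ = 1, q₁ = 2, q_k = (k+1)·(q_{k−1} + q_{k−2}) for k ≥ 2. Then the sequence of real numbers p_n / q_n converges to e as n → ∞; that is, the generalized continued fraction 2 + 2/(2 + 3/(3 + 4/(4 + ⋯))) equals e. -/
/-!
Both `n!` and the number `D n` of derangements of `n` letters satisfy the recurrence
`x (k + 2) = (k + 1) * (x (k + 1) + x k)`. Comparing initial values, `p n = (n + 2)!` and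
`q n = D (n + 2)`, so `p n / q n` is the reciprocal of the proportion of derangements among the
permutations of `n + 2` letters, and this proportion tends to `exp (-1)`.
-/

/-- The recurrence and two initial values determine the sequence. -/
theorem eq_shift_of_recurrence (x d : ℕ → ℕ)
    (hd : ∀ k, d (k + 2) = (k + 1) * (d k + d (k + 1)))
    (h0 : x 0 = d 2) (h1 : x 1 = d 3)
    (hx : ∀ k, 2 ≤ k → x k = (k + 1) * (x (k - 1) + x (k - 2))) (n : ℕ) :
    x n = d (n + 2) := by
  induction n using Nat.twoStepInduction with
  | zero => exact h0
  | one => exact h1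
  | more n ih ih' =>
    have h := hx (n + 2) (by omega)
    rw [show n + 2 - 1 = n + 1 by omega, show n + 2 - 2 = n by omega, ih, ih'] at h
    rw [h, hd (n + 2), add_comm (d (n + 2))]

theorem e_continued_fraction (p q : ℕ → ℕ)
    (hp0 : p 0 = 2) (hp1 : p 1 = 6)
    (hp : ∀ k, 2 ≤ k → p k = (k + 1) * (p (k - 1) + p (k - 2)))
    (hq0 : q 0 = 1) (hq1 : q 1 = 2)
    (hq : ∀ k, 2 ≤ k → q k = (k + 1) * (q (k - 1) + q (k - 2))) :
    Filter.Tendsto (fun n : ℕ => (p n : ℝ) / (q n : ℝ))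
      Filter.atTop (nhds (Real.exp 1)) := by
  have hpn : ∀ n, p n = (n + 2).factorial :=
    eq_shift_of_recurrence p Nat.factorial
      (fun k => by simp only [Nat.factorial_succ]; ring) (by simp [hp0]) (by rw [hp1]; rfl) hp
  have hqn : ∀ n, q n = numDerangements (n + 2) :=
    eq_shift_of_recurrence q numDerangements numDerangements_add_two
      (by rw [hq0]; rfl) (by rw [hq1]; rfl) hq
  have h := ((Filter.tendsto_add_atTop_iff_nat 2).2 numDerangements_tendsto_inv_e).inv₀
    (Real.exp_ne_zero _)
  simpa only [hpn, hqn, inv_div, Real.exp_neg, inv_inv] using h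
end

section
/- Define sequences of natural numbers by p₀ = 0, p₁ = 1, p_k = k·(p_{k−1} + p_{k−2}) for k ≥ 2, and q₀ = 1, q₁ = 1, q_k = k·(q_{k−1} + q_{k−2}) for k ≥ 2. Then for all n, p_n = !(n+1) and q_n = (n+1)! − !(n+1), and the sequence of real numbers p_n / q_n converges to 1/(e − 1); that is, the generalized continued fraction 1/(1 + 2/(2 + 3/(3 + ⋯))) equals 1/(e − 1). -/
/-!
Both `!(n+1)` and `(n+1)!` satisfy the recurrence `u k = k * (u (k-1) + u (k-2))`, hence so does
their difference; comparing initial values identifies `p` and `q`. Writing `x n = !(n+1) / (n+1)!`,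
the convergents are `x n / (1 - x n)`, and `x n → 1/e` gives the limit
`e⁻¹ / (1 - e⁻¹) = 1 / (e - 1)`.
-/

theorem one_div_e_sub_one_continued_fraction (p q : ℕ → ℕ)
    (hp0 : p 0 = 0) (hp1 : p 1 = 1)
    (hp : ∀ k, 2 ≤ k → p k = k * (p (k - 1) + p (k - 2)))
    (hq0 : q 0 = 1) (hq1 : q 1 = 1)
    (hq : ∀ k, 2 ≤ k → q k = k * (q (k - 1) + q (k - 2))) :
    (∀ n : ℕ, p n = numDerangements (n + 1) ∧
        q n = Nat.factorial (n + 1) - numDerangements (n + 1)) ∧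
      Filter.Tendsto (fun n : ℕ => (p n : ℝ) / (q n : ℝ))
        Filter.atTop (nhds (1 / (Real.exp 1 - 1))) := by
  -- The identity for `q` in additive form avoids truncated subtraction in the induction.
  have key : ∀ n : ℕ, p n = numDerangements (n + 1) ∧
      q n + numDerangements (n + 1) = Nat.factorial (n + 1) := by
    intro n
    induction n using Nat.twoStepInduction with
    | zero => simp [hp0, hq0]
    | one => simp [hp1, hq1, numDerangements_add_two, Nat.factorial]
    | more n ih0 ih1 =>
      have h1 := hp (n + 2) (by omega)
      have h2 := hq (n + 2) (by omega)
      simp only [Nat.add_sub_cancel, show n + 2 - 1 = n + 1 by omega] at h1 h2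
      have hD := numDerangements_add_two (n + 1)
      refine ⟨?_, ?_⟩
      · rw [h1, ih0.1, ih1.1, hD]; ring
      · have hF : Nat.factorial (n + 2 + 1)
            = (n + 2) * (Nat.factorial (n + 1 + 1) + Nat.factorial (n + 1)) := by
          simp only [Nat.factorial_succ]; ring
        rw [hF, ← ih0.2, ← ih1.2, h2, hD]; ring
  refine ⟨fun n => ⟨(key n).1, by have := (key n).2; omega⟩, ?_⟩
  have hx := numDerangements_tendsto_inv_e.comp (Filter.tendsto_add_atTop_nat 1)
  have he : (1 : ℝ) - Real.exp (-1) ≠ 0 := by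
    have : Real.exp (-1) < 1 := Real.exp_lt_one_iff.2 (by norm_num)
    linarith
  have hlim := hx.div (tendsto_const_nhds.sub hx) he
  have hval : Real.exp (-1) / (1 - Real.exp (-1)) = 1 / (Real.exp 1 - 1) := by
    have h1 : Real.exp 1 - 1 ≠ 0 := by
      have : 1 < Real.exp 1 := Real.one_lt_exp_iff.2 one_pos
      linarith
    have h2 : Real.exp (-1) * Real.exp 1 = 1 := by rw [← Real.exp_add]; simp
    rw [div_eq_div_iff he h1]
    linear_combination h2
  rw [hval] at hlim
  refine hlim.congr fun n => ?_
  have hF : (Nat.factorial (n + 1) : ℝ) ≠ 0 := by positivity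
  have hq' : (q n : ℝ) = Nat.factorial (n + 1) - numDerangements (n + 1) := by
    rw [← (key n).2]; push_cast; ring
  simp only [Function.comp, Pi.div_apply]
  rw [hq', (key n).1, one_sub_div hF, div_div_div_cancel_right₀ hF]
end
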